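/- For every cycle of length 2l in the Tanner graph TG(H_{m,𝓑,S}), there exists a sequence (i_0, j_0, i_1, j_1, …, i_{l−1}, j_{l−1}) with i_l := i_0, recording the blocks of H_{m,𝓑,S} traversed by the cycle, such that for each 0 ≤ k ≤ l−1: {i_k, i_{k+1}} ⊆ B_{j_k}, i_k ≠ i_{k+1}, j_k ≠ j_{(k+1) mod l}, and Σ_{k=0}^{l−1} (s_{i_k,j_k} − s_{i_{k+1},j_k}) ≡ 0 (mod m); that is, every 2l-cycle of TG(H_{m,𝓑,S}) corresponds to a 2l-cycle chain. -/

import Mathlib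

/-!
Statement 1: Every 2l-cycle in the Tanner graph of the QC parity-check matrix
H_{m,𝓑,S} corresponds to a 2l-cycle chain (i_0,j_0,…,i_{l−1},j_{l−1}).
-/

/-- Vertex type of the Tanner graph of a `v m × k m` block matrix:
check nodes `(i, r)` (row-block `i`, row index `r` within the block) and
variable nodes `(j, c)` (column-block `j`, column index `c` within the block). -/
abbrev TannerVertex (v k m : ℕ) := (Fin v × ZMod m) ⊕ (Fin k × ZMod m)

/-- The Tanner graph of `H_{m,𝓑,S}`, where `Bl j` is the block `B_j` of the
design `𝓑` (the row indices of the nonzero entries of the `j`-th column of the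
base matrix) and `S` is the `(m,𝓑)`-slope vector: a check node `(i, r)` is
adjacent to a variable node `(j, c)` iff `i ∈ B_j` and `r = c + s_{i,j}`
(the `(r,c)` entry of the CPM `I^{s_{i,j}}` equals 1). -/
def qcTannerGraph (v k m : ℕ) (Bl : Fin k → Finset (Fin v))
    (S : Fin v → Fin k → ZMod m) : SimpleGraph (TannerVertex v k m) :=
  SimpleGraph.fromRel (fun x y =>
    ∃ (i : Fin v) (r : ZMod m) (j : Fin k) (c : ZMod m),
      x = Sum.inl (i, r) ∧ y = Sum.inr (j, c) ∧ i ∈ Bl j ∧ r = c + S i j)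

/-!
An edge between the check node `(i, r)` and the variable node `(j, c)` says `s_{i,j} = r - c`.
Along a closed walk that alternates between check nodes `(i_t, r_t)` and variable nodes
`(j_t, c_t)`, this gives `s_{i_t,j_t} - s_{i_{t+1},j_t} = r_t - r_{t+1}`, so the sum telescopes to
zero. Moreover a node has at most one neighbour in each block, so consecutive blocks differ as
soon as the walk never turns back along the edge it has just used. Every cycle has this property.
-/

section CyclicallyReduced

variable {V : Type*} {G : SimpleGraph V} {u : V} {C : G.Walk u u}

/-- The vertices of a closed walk as an infinite sequence, going round the walk again and again. For
the empty walk this is the constant sequence. -/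
def cyclicVert (C : G.Walk u u) (n : ℕ) : V :=
  C.getVert (n % C.length)

/-- Closed walks without backtracking, including at the base vertex. Since `cyclicVert` goes round
the walk, one condition covers both; it excludes the empty walk. -/
def IsCyclicallyReduced (C : G.Walk u u) : Prop :=
  ∀ n, cyclicVert C n ≠ cyclicVert C (n + 2)

theorem cyclicVert_periodic (C : G.Walk u u) : Function.Periodic (cyclicVert C) C.length :=
  fun n ↦ by simp only [cyclicVert, Nat.add_mod_right]

theorem cyclicVert_of_le_length {n : ℕ} (hn : n ≤ C.length) : cyclicVert C n = C.getVert n := by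
  rcases hn.lt_or_eq with hlt | rfl
  · rw [cyclicVert, Nat.mod_eq_of_lt hlt]
  · rw [cyclicVert, Nat.mod_self, C.getVert_zero, C.getVert_length]

theorem adj_cyclicVert_succ (hC : ¬C.Nil) (n : ℕ) :
    G.Adj (cyclicVert C n) (cyclicVert C (n + 1)) := by
  have hlt : n % C.length < C.length :=
    Nat.mod_lt n (SimpleGraph.Walk.not_nil_iff_lt_length.mp hC)
  have hsucc : cyclicVert C (n + 1) = C.getVert (n % C.length + 1) := by
    rw [← cyclicVert_of_le_length (Nat.add_one_le_of_lt hlt), cyclicVert, cyclicVert,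
      Nat.mod_add_mod]
  rw [hsucc]
  exact C.adj_getVert_succ hlt

theorem IsCyclicallyReduced.not_nil (hC : IsCyclicallyReduced C) : ¬C.Nil := by
  intro hnil
  obtain rfl := hnil.eq_nil
  exact hC 0 rfl

theorem modEq_of_cyclicVert_eq (hC : C.IsCycle) {n n' : ℕ}
    (h : cyclicVert C n = cyclicVert C n') : n ≡ n' [MOD C.length] := by
  have hpos : 0 < C.length := SimpleGraph.Walk.not_nil_iff_lt_length.mp hC.not_nil
  exact hC.getVert_injOn' (Nat.le_sub_one_of_lt (Nat.mod_lt n hpos))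
    (Nat.le_sub_one_of_lt (Nat.mod_lt n' hpos)) h

theorem isCyclicallyReduced_of_isCycle (hC : C.IsCycle) : IsCyclicallyReduced C := by
  intro n h
  have hdvd : C.length ∣ 2 := by
    simpa using (Nat.modEq_iff_dvd' (Nat.le_add_right n 2)).mp (modEq_of_cyclicVert_eq hC h)
  have hle : C.length ≤ 2 := Nat.le_of_dvd two_pos hdvd
  exact absurd hC.three_le_length (by omega)

end CyclicallyReduced

section CompleteBipartite

variable {α β : Type*}

theorem isRight_of_adj_of_isLeft {x y : α ⊕ β} (h : (completeBipartiteGraph α β).Adj x y)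
    (hx : x.isLeft) : y.isRight := by
  cases x <;> cases y <;> simp_all

theorem isLeft_of_adj_of_isRight {x y : α ⊕ β} (h : (completeBipartiteGraph α β).Adj x y)
    (hx : x.isRight) : y.isLeft := by
  cases x <;> cases y <;> simp_all

theorem exists_alternating_of_adj_completeBipartiteGraph {w : ℕ → α ⊕ β}
    (hw : ∀ n, (completeBipartiteGraph α β).Adj (w n) (w (n + 1))) (h0 : (w 0).isLeft) :
    ∃ (a : ℕ → α) (b : ℕ → β), ∀ t, w (2 * t) = Sum.inl (a t) ∧ w (2 * t + 1) = Sum.inr (b t) := by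
  have left_even (t : ℕ) : (w (2 * t)).isLeft := by
    induction t with
    | zero => exact h0
    | succ t ih => exact isLeft_of_adj_of_isRight (hw _) (isRight_of_adj_of_isLeft (hw _) ih)
  choose a ha using fun t ↦ Sum.isLeft_iff.mp (left_even t)
  choose b hb using fun t ↦ Sum.isRight_iff.mp (isRight_of_adj_of_isLeft (hw _) (left_even t))
  exact ⟨a, b, fun t ↦ ⟨ha t, hb t⟩⟩

end CompleteBipartite

section LiftTannerGraph

variable {ι κ A : Type*} {l : ℕ} {Bl : κ → Finset ι}

/-- The Tanner graph of a lifted base matrix, with the circulant permutation matrices replaced by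
the permutation matrices of the translations of an additive group `A`. For `ι = Fin v`,
`κ = Fin k` and `A = ZMod m` it is `qcTannerGraph v k m Bl S`, by definition. -/
def liftTannerGraph [Add A] (Bl : κ → Finset ι) (S : ι → κ → A) :
    SimpleGraph ((ι × A) ⊕ (κ × A)) :=
  SimpleGraph.fromRel (fun x y =>
    ∃ (i : ι) (r : A) (j : κ) (c : A),
      x = Sum.inl (i, r) ∧ y = Sum.inr (j, c) ∧ i ∈ Bl j ∧ r = c + S i j)

/-- The `2l`-cycle chains `(i_0, j_0, …, i_{l-1}, j_{l-1})`, with slopes in an arbitrary abelian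
group. The values of `i` beyond `l` and of `j` from `l` on are irrelevant. -/
structure IsCycleChain [AddCommGroup A] (l : ℕ) (Bl : κ → Finset ι) (S : ι → κ → A)
    (i : ℕ → ι) (j : ℕ → κ) : Prop where
  closed : i l = i 0
  step : ∀ t < l, i t ∈ Bl (j t) ∧ i (t + 1) ∈ Bl (j t) ∧ i t ≠ i (t + 1) ∧
    j t ≠ j ((t + 1) % l)
  sum_eq_zero : ∑ t ∈ Finset.range l, (S (i t) (j t) - S (i (t + 1)) (j t)) = 0

section Adj

variable {S : ι → κ → A}

theorem liftTannerGraph_adj_inl_inr [Add A] {x : ι × A} {y : κ × A} :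
    (liftTannerGraph Bl S).Adj (Sum.inl x) (Sum.inr y) ↔
      x.1 ∈ Bl y.1 ∧ x.2 = y.2 + S x.1 y.1 := by
  obtain ⟨i, r⟩ := x
  obtain ⟨j, c⟩ := y
  simp only [liftTannerGraph, SimpleGraph.fromRel_adj]
  constructor
  · rintro ⟨-, ⟨_, _, _, _, ⟨⟩, ⟨⟩, hmem, hslope⟩ | ⟨_, _, _, _, ⟨⟩, _⟩⟩
    exact ⟨hmem, hslope⟩
  · rintro ⟨hmem, hslope⟩
    exact ⟨Sum.inl_ne_inr, Or.inl ⟨i, r, j, c, rfl, rfl, hmem, hslope⟩⟩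

theorem liftTannerGraph_le_completeBipartiteGraph [Add A] :
    liftTannerGraph Bl S ≤ completeBipartiteGraph (ι × A) (κ × A) := by
  rintro _ _ ⟨-, ⟨_, _, _, _, rfl, rfl, -⟩ | ⟨_, _, _, _, rfl, rfl, -⟩⟩
  · exact Or.inl ⟨rfl, rfl⟩
  · exact Or.inr ⟨rfl, rfl⟩

theorem checkNode_eq_of_adj_of_block_eq [Add A] {x x' : ι × A} {y : κ × A}
    (h : (liftTannerGraph Bl S).Adj (Sum.inl x) (Sum.inr y))
    (h' : (liftTannerGraph Bl S).Adj (Sum.inl x') (Sum.inr y)) (hblock : x.1 = x'.1) : x = x' := by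
  refine Prod.ext hblock ?_
  rw [(liftTannerGraph_adj_inl_inr.mp h).2, (liftTannerGraph_adj_inl_inr.mp h').2, hblock]

theorem variableNode_eq_of_adj_of_block_eq [Add A] [IsRightCancelAdd A] {x : ι × A} {y y' : κ × A}
    (h : (liftTannerGraph Bl S).Adj (Sum.inl x) (Sum.inr y))
    (h' : (liftTannerGraph Bl S).Adj (Sum.inl x) (Sum.inr y')) (hblock : y.1 = y'.1) : y = y' := by
  have hslope : y.2 + S x.1 y.1 = y'.2 + S x.1 y'.1 :=
    (liftTannerGraph_adj_inl_inr.mp h).2.symm.trans (liftTannerGraph_adj_inl_inr.mp h').2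
  rw [hblock] at hslope
  exact Prod.ext hblock (add_right_cancel hslope)

theorem slope_sub_slope_of_adj [AddCommGroup A] {x x' : ι × A} {y : κ × A}
    (h : (liftTannerGraph Bl S).Adj (Sum.inl x) (Sum.inr y))
    (h' : (liftTannerGraph Bl S).Adj (Sum.inl x') (Sum.inr y)) :
    S x.1 y.1 - S x'.1 y.1 = x.2 - x'.2 := by
  rw [(liftTannerGraph_adj_inl_inr.mp h).2, (liftTannerGraph_adj_inl_inr.mp h').2,
    add_sub_add_left_eq_sub]

end Adj

variable [AddCommGroup A] {S : ι → κ → A}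

theorem isCycleChain_of_adj {a : ℕ → ι × A} {b : ℕ → κ × A}
    (ha : Function.Periodic a l) (hb : Function.Periodic b l)
    (hadj : ∀ t, (liftTannerGraph Bl S).Adj (Sum.inl (a t)) (Sum.inr (b t)))
    (hadj_succ : ∀ t, (liftTannerGraph Bl S).Adj (Sum.inl (a (t + 1))) (Sum.inr (b t)))
    (ha_ne : ∀ t, a t ≠ a (t + 1)) (hb_ne : ∀ t, b t ≠ b (t + 1)) :
    IsCycleChain l Bl S (fun t ↦ (a t).1) (fun t ↦ (b t).1) where
  closed := congrArg Prod.fst ha.eq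
  step t _ := by
    refine ⟨(liftTannerGraph_adj_inl_inr.mp (hadj t)).1,
      (liftTannerGraph_adj_inl_inr.mp (hadj_succ t)).1, fun h ↦ ?_, fun h ↦ ?_⟩
    · exact ha_ne t (checkNode_eq_of_adj_of_block_eq (hadj t) (hadj_succ t) h)
    · rw [hb.map_mod_nat] at h
      exact hb_ne t (variableNode_eq_of_adj_of_block_eq (hadj_succ t) (hadj (t + 1)) h)
  sum_eq_zero := calc
    ∑ t ∈ Finset.range l, (S (a t).1 (b t).1 - S (a (t + 1)).1 (b t).1)
    _ = ∑ t ∈ Finset.range l, ((a t).2 - (a (t + 1)).2) :=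
      Finset.sum_congr rfl fun t _ ↦ slope_sub_slope_of_adj (hadj t) (hadj_succ t)
    _ = (a 0).2 - (a l).2 := Finset.sum_range_sub' (fun t ↦ (a t).2) l
    _ = 0 := by rw [ha.eq, sub_self]

theorem exists_isCycleChain_of_periodic_of_isLeft {w : ℕ → (ι × A) ⊕ (κ × A)}
    (hper : Function.Periodic w (2 * l))
    (hadj : ∀ n, (liftTannerGraph Bl S).Adj (w n) (w (n + 1)))
    (hne : ∀ n, w n ≠ w (n + 2)) (h0 : (w 0).isLeft) :
    ∃ (i : ℕ → ι) (j : ℕ → κ), IsCycleChain l Bl S i j ∧ Function.Periodic i l ∧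
      ∀ t, (∃ r, w (2 * t) = Sum.inl (i t, r)) ∧ (∃ c, w (2 * t + 1) = Sum.inr (j t, c)) := by
  obtain ⟨a, b, hab⟩ := exists_alternating_of_adj_completeBipartiteGraph
    (fun n ↦ liftTannerGraph_le_completeBipartiteGraph (hadj n)) h0
  have hwa (t : ℕ) : w (2 * t) = Sum.inl (a t) := (hab t).1
  have hwb (t : ℕ) : w (2 * t + 1) = Sum.inr (b t) := (hab t).2
  have ha : Function.Periodic a l := fun t ↦ Sum.inl_injective <| by
    rw [← hwa, ← hwa, mul_add, hper]
  have hb : Function.Periodic b l := fun t ↦ Sum.inr_injective <| by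
    rw [← hwb, ← hwb, mul_add, add_right_comm, hper]
  refine ⟨fun t ↦ (a t).1, fun t ↦ (b t).1, isCycleChain_of_adj ha hb ?_ ?_ ?_ ?_,
    fun t ↦ congrArg Prod.fst (ha t), fun t ↦ ⟨⟨_, hwa t⟩, ⟨_, hwb t⟩⟩⟩ <;> intro t
  · rw [← hwa, ← hwb]
    exact hadj (2 * t)
  · rw [← hwa, ← hwb]
    exact (hadj (2 * t + 1)).symm
  · rw [← Sum.inl_injective.ne_iff, ← hwa, ← hwa]
    exact hne (2 * t)
  · rw [← Sum.inr_injective.ne_iff, ← hwb, ← hwb]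
    exact hne (2 * t + 1)

theorem exists_isCycleChain_of_periodic_of_isRight {w : ℕ → (ι × A) ⊕ (κ × A)} (hl : 0 < l)
    (hper : Function.Periodic w (2 * l))
    (hadj : ∀ n, (liftTannerGraph Bl S).Adj (w n) (w (n + 1)))
    (hne : ∀ n, w n ≠ w (n + 2)) (h0 : (w 0).isRight) :
    ∃ (i : ℕ → ι) (j : ℕ → κ), IsCycleChain l Bl S i j ∧ Function.Periodic i l ∧
      ∀ t, (∃ c, w (2 * t) = Sum.inr (j t, c)) ∧ (∃ r, w (2 * t + 1) = Sum.inl (i (t + 1), r)) := by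
  -- Adding `d = 2 * l - 1` amounts to stepping back once, onto a check node.
  obtain ⟨d, hd⟩ : ∃ d, d + 1 = 2 * l := ⟨2 * l - 1, by omega⟩
  have succ_shift (n : ℕ) : w (n + 1 + d) = w n := by
    rw [add_assoc, add_comm 1 d, hd, hper]
  have hleft : (w (0 + d)).isLeft := by
    have hadj_back := liftTannerGraph_le_completeBipartiteGraph (hadj (0 + d))
    rw [add_right_comm, succ_shift] at hadj_back
    exact isLeft_of_adj_of_isRight hadj_back.symm h0
  obtain ⟨i, j, hchain, hi, hblocks⟩ := exists_isCycleChain_of_periodic_of_isLeft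
    (Bl := Bl) (S := S) (w := fun n ↦ w (n + d)) (hper.add_const d)
    (fun n ↦ by rw [add_right_comm]; exact hadj (n + d))
    (fun n ↦ by rw [add_right_comm]; exact hne (n + d)) hleft
  refine ⟨i, j, hchain, hi, fun t ↦ ⟨?_, ?_⟩⟩
  · simpa only [succ_shift] using (hblocks t).2
  · simpa only [mul_add, mul_one, succ_shift] using (hblocks (t + 1)).1

theorem every_qc_cycle_gives_cycle_chain_general {u : (ι × A) ⊕ (κ × A)}
    {C : (liftTannerGraph Bl S).Walk u u} (hC : IsCyclicallyReduced C)
    (hlen : C.length = 2 * l) :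
    ∃ (i : ℕ → ι) (j : ℕ → κ), IsCycleChain l Bl S i j ∧
      ((∀ t < l, (∃ r, C.getVert (2 * t) = Sum.inl (i t, r)) ∧
          (∃ c, C.getVert (2 * t + 1) = Sum.inr (j t, c))) ∨
       (∀ t < l, (∃ c, C.getVert (2 * t) = Sum.inr (j t, c)) ∧
          (∃ r, C.getVert (2 * t + 1) = Sum.inl (i ((t + 1) % l), r)))) := by
  have hper : Function.Periodic (cyclicVert C) (2 * l) := hlen ▸ cyclicVert_periodic C
  have hadj := adj_cyclicVert_succ hC.not_nil
  have hvert {n : ℕ} (hn : n ≤ 2 * l) : C.getVert n = cyclicVert C n :=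
    (cyclicVert_of_le_length (hn.trans_eq hlen.symm)).symm
  cases h0 : (cyclicVert C 0).isLeft
  · have hl : 0 < l := by
      have := SimpleGraph.Walk.not_nil_iff_lt_length.mp hC.not_nil
      omega
    obtain ⟨i, j, hchain, hi, hblocks⟩ :=
      exists_isCycleChain_of_periodic_of_isRight hl hper hadj hC (Sum.isLeft_eq_false.mp h0)
    refine ⟨i, j, hchain, Or.inr fun t ht ↦ ?_⟩
    rw [hvert (by omega), hvert (by omega), hi.map_mod_nat]
    exact hblocks t
  · obtain ⟨i, j, hchain, -, hblocks⟩ := exists_isCycleChain_of_periodic_of_isLeft hper hadj hC h0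
    refine ⟨i, j, hchain, Or.inl fun t ht ↦ ?_⟩
    rw [hvert (by omega), hvert (by omega)]
    exact hblocks t

end LiftTannerGraph

theorem every_qc_cycle_gives_cycle_chain
    (v k m l : ℕ) (hl : 0 < l)
    (Bl : Fin k → Finset (Fin v)) (S : Fin v → Fin k → ZMod m)
    (u : TannerVertex v k m)
    (C : (qcTannerGraph v k m Bl S).Walk u u)
    (hC : C.IsCycle) (hlen : C.length = 2 * l) :
    ∃ (i : ℕ → Fin v) (j : ℕ → Fin k),
      -- `i l = i 0`
      i l = i 0 ∧
      -- chain conditions: for each `0 ≤ t ≤ l−1`,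
      -- `{i_t, i_{t+1}} ⊆ B_{j_t}`, `i_t ≠ i_{t+1}`, `j_t ≠ j_{(t+1) mod l}`
      (∀ t < l, i t ∈ Bl (j t) ∧ i (t + 1) ∈ Bl (j t) ∧ i t ≠ i (t + 1) ∧
        j t ≠ j ((t + 1) % l)) ∧
      -- `Σ_{t=0}^{l−1} (s_{i_t,j_t} − s_{i_{t+1},j_t}) ≡ 0 (mod m)`
      (∑ t ∈ Finset.range l, (S (i t) (j t) - S (i (t + 1)) (j t))) = 0 ∧
      -- the chain records the blocks of `H` traversed by the cycle
      ((∀ t < l, (∃ r, C.getVert (2 * t) = Sum.inl (i t, r)) ∧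
          (∃ c, C.getVert (2 * t + 1) = Sum.inr (j t, c))) ∨
       (∀ t < l, (∃ c, C.getVert (2 * t) = Sum.inr (j t, c)) ∧
          (∃ r, C.getVert (2 * t + 1) = Sum.inl (i ((t + 1) % l), r)))) := by
  obtain ⟨i, j, hchain, hblocks⟩ := every_qc_cycle_gives_cycle_chain_general (Bl := Bl) (S := S)
    (isCyclicallyReduced_of_isCycle hC) hlen
  exact ⟨i, j, hchain.closed, hchain.step, hchain.sum_eq_zero, hblocks⟩
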